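/- arXiv:2308.03071 — 2 statements merged into one kernel-verified Lean document; each statement's English description precedes it below -/
import Mathlib

section
/- Let d ≥ 2 and let Λ ⊆ K̃^d be a well rounded unimodular lattice. Then CovRad_{O^d}(Λ) = q^{-1}; that is, sup_{w ∈ K̃^d} inf_{u ∈ Λ} ‖w − u‖ = q^{-1}. (Function field analogue of Woods' conjecture.) -/
noncomputable section

open scoped Classical

variable (Fq : Type) [Field Fq] [Fintype Fq]

/-- `K̃ = 𝔽_q((x⁻¹))`, realized as formal Laurent series in `t = x⁻¹`. -/
abbrev Kt := LaurentSeries Fq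

/-- The element `x` of `K̃` (the inverse of the Laurent series variable). -/
def Kx : Kt Fq := HahnSeries.single (-1 : ℤ) 1

/-- Absolute value `|f| = q^{deg f}`, i.e. `q^{-order f}` in terms of `t = x⁻¹`. -/
def Kabs (f : Kt Fq) : ℝ := if f = 0 then 0 else (Fintype.card Fq : ℝ) ^ (-f.order)

/-- The ring embedding of `R = 𝔽_q[x]` into `K̃`. -/
def polyK : Polynomial Fq →+* Kt Fq := (Polynomial.aeval (Kx Fq)).toRingHom

/-- Sup norm on `K̃^d`. -/
def vnorm {d : ℕ} (v : Fin d → Kt Fq) : ℝ := ⨆ i, Kabs Fq (v i)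

/-- The lattice `g·R^d`. -/
def lattice {d : ℕ} (g : Matrix (Fin d) (Fin d) (Kt Fq)) : Set (Fin d → Kt Fq) :=
  {v | ∃ c : Fin d → Polynomial Fq, v = g.mulVec fun j => polyK Fq (c j)}

/-- `i`-th successive minimum of `Λ` with respect to a norm `nrm`: the least `r > 0` such that
`Λ` contains `i` linearly independent vectors of norm at most `r`. -/
def minimaN {d : ℕ} (nrm : (Fin d → Kt Fq) → ℝ) (Λ : Set (Fin d → Kt Fq)) (i : ℕ) : ℝ :=
  sInf {r : ℝ | 0 < r ∧ ∃ v : Fin i → Fin d → Kt Fq,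
    (∀ j, v j ∈ Λ) ∧ LinearIndependent (Kt Fq) v ∧ ∀ j, nrm (v j) ≤ r}

/-- `i`-th successive minimum with respect to the sup norm. -/
def minima {d : ℕ} (Λ : Set (Fin d → Kt Fq)) (i : ℕ) : ℝ := minimaN Fq (vnorm Fq) Λ i

/-- Covering radius of `Λ` with respect to the norm `nrm`. -/
def covRad {d : ℕ} (nrm : (Fin d → Kt Fq) → ℝ) (Λ : Set (Fin d → Kt Fq)) : ℝ :=
  ⨆ w : Fin d → Kt Fq, ⨅ u : Λ, nrm (w - u.1)

/-- Length of the shortest nonzero vector of `Λ`. -/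
def ell {d : ℕ} (Λ : Set (Fin d → Kt Fq)) : ℝ :=
  sInf {r : ℝ | ∃ v ∈ Λ, v ≠ 0 ∧ vnorm Fq v = r}

/-- `Λ` is well rounded: it contains `d` linearly independent vectors of norm `ℓ(Λ)`. -/
def IsWellRounded {d : ℕ} (Λ : Set (Fin d → Kt Fq)) : Prop :=
  ∃ v : Fin d → Fin d → Kt Fq, (∀ j, v j ∈ Λ) ∧ LinearIndependent (Kt Fq) v ∧
    ∀ j, vnorm Fq (v j) = ell Fq Λ

/-- The multiplicative "norm" `N(v) = ∏ |v i|`. -/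
def Nprod {d : ℕ} (v : Fin d → Kt Fq) : ℝ := ∏ i, Kabs Fq (v i)

/-- The Minkowski function `μ(Λ) = sup_w inf_{u ∈ Λ} N(w - u)`. -/
def mink {d : ℕ} (Λ : Set (Fin d → Kt Fq)) : ℝ :=
  ⨆ w : Fin d → Kt Fq, ⨅ u : Λ, Nprod Fq (w - u.1)

set_option linter.unusedSectionVars false

/-- Coefficients of `f` below `k` vanish. -/
def OO (k : ℤ) (f : Kt Fq) : Prop := ∀ n < k, f.coeff n = 0

lemma one_lt_card' : (1 : ℝ) < (Fintype.card Fq : ℝ) := by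
  exact_mod_cast Fintype.one_lt_card

lemma OO_iff {k : ℤ} {f : Kt Fq} (hf : f ≠ 0) : OO Fq k f ↔ k ≤ f.order :=
  (HahnSeries.le_order_iff_forall hf).symm

lemma Kabs_le_iff (k : ℤ) (f : Kt Fq) :
    Kabs Fq f ≤ (Fintype.card Fq : ℝ) ^ (-k) ↔ OO Fq k f := by
  have h1 := one_lt_card' Fq
  by_cases hf : f = 0
  · subst hf
    simp only [Kabs, OO, if_true, HahnSeries.coeff_zero, implies_true, iff_true]
    positivity
  · rw [OO_iff Fq hf, Kabs, if_neg hf, zpow_le_zpow_iff_right₀ h1]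
    omega

lemma OO_sum {ι : Type*} (s : Finset ι) (f : ι → Kt Fq) {k : ℤ}
    (h : ∀ i ∈ s, OO Fq k (f i)) : OO Fq k (∑ i ∈ s, f i) := by
  intro n hn
  rw [HahnSeries.coeff_sum]
  exact Finset.sum_eq_zero fun i hi => h i hi n hn

lemma OO_mul {a b : ℤ} {f g : Kt Fq} (hf : OO Fq a f) (hg : OO Fq b g) :
    OO Fq (a + b) (f * g) := by
  by_cases h1 : f = 0
  · intro n _; simp [h1]
  by_cases h2 : g = 0
  · intro n _; simp [h2]
  rw [OO_iff Fq (mul_ne_zero h1 h2), HahnSeries.order_mul h1 h2]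
  rw [OO_iff Fq h1] at hf
  rw [OO_iff Fq h2] at hg
  omega

lemma OO_mulVec {d : ℕ} {a b : ℤ} {A : Matrix (Fin d) (Fin d) (Kt Fq)} {z : Fin d → Kt Fq}
    (hA : ∀ i j, OO Fq a (A i j)) (hz : ∀ j, OO Fq b (z j)) (i : Fin d) :
    OO Fq (a + b) (A.mulVec z i) := by
  rw [Matrix.mulVec, dotProduct]
  exact OO_sum Fq _ _ fun j _ => OO_mul Fq (hA i j) (hz j)

lemma OO_ofPowerSeries (F : PowerSeries Fq) : OO Fq 0 (HahnSeries.ofPowerSeries ℤ Fq F) := by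
  intro n hn
  rw [PowerSeries.coeff_coe, if_pos hn]

lemma Kabs_nonneg (f : Kt Fq) : 0 ≤ Kabs Fq f := by
  unfold Kabs; split_ifs <;> positivity

lemma vnorm_nonneg {d : ℕ} (v : Fin d → Kt Fq) : 0 ≤ vnorm Fq v :=
  Real.iSup_nonneg fun _ => Kabs_nonneg Fq _

lemma vnorm_le_iff {d : ℕ} (hd : 0 < d) (k : ℤ) (v : Fin d → Kt Fq) :
    vnorm Fq v ≤ (Fintype.card Fq : ℝ) ^ (-k) ↔ ∀ i, OO Fq k (v i) := by
  have : Nonempty (Fin d) := ⟨⟨0, hd⟩⟩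
  unfold vnorm
  rw [ciSup_le_iff (Set.finite_range _).bddAbove]
  exact forall_congr' fun i => Kabs_le_iff Fq k _

lemma vnorm_eq {d : ℕ} (v : Fin d → Kt Fq) (hv : v ≠ 0) :
    ∃ k : ℤ, vnorm Fq v = (Fintype.card Fq : ℝ) ^ (-k) := by
  have h1 := one_lt_card' Fq
  obtain ⟨i0, hi0⟩ := Function.ne_iff.mp hv
  rw [Pi.zero_apply] at hi0
  have : Nonempty (Fin d) := ⟨i0⟩
  obtain ⟨i, hi⟩ := exists_eq_ciSup_of_finite (f := fun i => Kabs Fq (v i))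
  have hle : Kabs Fq (v i0) ≤ Kabs Fq (v i) := by
    rw [hi]
    exact le_ciSup (f := fun i => Kabs Fq (v i)) (Set.finite_range _).bddAbove i0
  have hvi : v i ≠ 0 := by
    intro h0
    have : (0 : ℝ) < Kabs Fq (v i0) := by
      rw [Kabs, if_neg hi0]; positivity
    rw [h0] at hle
    simp only [Kabs, if_true] at hle this
    linarith
  refine ⟨(v i).order, ?_⟩
  unfold vnorm
  rw [← hi]
  simp only [Kabs, if_neg hvi]

lemma polyK_coeff (p : Polynomial Fq) (n : ℤ) :
    (polyK Fq p).coeff n = if 0 < n then 0 else p.coeff (-n).toNat := by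
  induction p using Polynomial.induction_on' with
  | add p q hp hq =>
    rw [map_add, HahnSeries.coeff_add, hp, hq]
    split_ifs <;> simp
  | monomial k a =>
    have : polyK Fq (Polynomial.monomial k a) = HahnSeries.single (-(k : ℤ)) a := by
      simp only [polyK, AlgHom.toRingHom_eq_coe, RingHom.coe_coe, Polynomial.aeval_monomial, Kx,
        HahnSeries.single_pow]
      have hal : algebraMap Fq (Kt Fq) a = HahnSeries.single 0 a := by
        first
          | rfl
          | (rw [HahnSeries.algebraMap_apply']; simp [HahnSeries.C_apply])
      rw [hal]
      simp [HahnSeries.single_mul_single]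
    rw [this, HahnSeries.coeff_single, Polynomial.coeff_monomial]
    split_ifs <;> first | rfl | omega

lemma polyK_order (p : Polynomial Fq) (hp : polyK Fq p ≠ 0) : (polyK Fq p).order ≤ 0 := by
  by_contra h
  push Not at h
  have := HahnSeries.coeff_order_eq_zero.not.mpr hp
  rw [polyK_coeff, if_pos h] at this
  exact this rfl

lemma exists_polyPart (y : Kt Fq) : ∃ p : Polynomial Fq, OO Fq 1 (y - polyK Fq p) := by
  refine ⟨∑ k ∈ Finset.range ((-y.order).toNat + 1),
    Polynomial.monomial k (y.coeff (-(k : ℤ))), ?_⟩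
  intro n hn
  rw [HahnSeries.coeff_sub, polyK_coeff, if_neg (by omega), Polynomial.finsetSum_coeff]
  simp only [Polynomial.coeff_monomial]
  rw [Finset.sum_ite_eq']
  split_ifs with h
  · have : (-((-n).toNat : ℤ)) = n := by omega
    rw [this, sub_self]
  · rw [sub_zero]
    apply HahnSeries.coeff_eq_zero_of_lt_order
    simp at h
    omega

/-- A family with vanishing coefficients below `m`, as power series. -/
def Wps {d : ℕ} (m : ℤ) (V : Matrix (Fin d) (Fin d) (Kt Fq)) :
    Matrix (Fin d) (Fin d) (PowerSeries Fq) :=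
  fun i j => PowerSeries.mk fun n => (V i j).coeff (m + n)

lemma Wps_spec {d : ℕ} (m : ℤ) (V : Matrix (Fin d) (Fin d) (Kt Fq))
    (hV : ∀ i j, OO Fq m (V i j)) :
    V = (HahnSeries.single m (1 : Fq) : Kt Fq) •
      (HahnSeries.ofPowerSeries ℤ Fq).mapMatrix (Wps Fq m V) := by
  ext i j n
  simp only [Matrix.smul_apply, RingHom.mapMatrix_apply, Matrix.map_apply, smul_eq_mul,
    HahnSeries.coeff_single_mul, one_mul, PowerSeries.coeff_coe, Wps, PowerSeries.coeff_mk]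
  split_ifs with h
  · exact hV i j n (by omega)
  · congr 1
    omega

lemma Wps_det {d : ℕ} (m : ℤ) (V : Matrix (Fin d) (Fin d) (Kt Fq))
    (h : (Matrix.of fun i j => (V i j).coeff m).det ≠ 0) : IsUnit (Wps Fq m V).det := by
  rw [PowerSeries.isUnit_iff_constantCoeff, isUnit_iff_ne_zero, RingHom.map_det]
  convert h using 2
  ext i j
  simp [Wps]

lemma det_order {d : ℕ} (m : ℤ) (V : Matrix (Fin d) (Fin d) (Kt Fq))
    (hV : ∀ i j, OO Fq m (V i j))
    (h : (Matrix.of fun i j => (V i j).coeff m).det ≠ 0) : V.det.order = d * m := by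
  have hu := Wps_det Fq m V h
  have hE : V.det = (HahnSeries.single m (1 : Fq) : Kt Fq) ^ d *
      HahnSeries.ofPowerSeries ℤ Fq (Wps Fq m V).det := by
    conv_lhs => rw [Wps_spec Fq m V hV]
    rw [Matrix.det_smul, RingHom.map_det, Fintype.card_fin]
  obtain ⟨u, hu'⟩ := hu
  set a := HahnSeries.ofPowerSeries ℤ Fq (Wps Fq m V).det with ha
  set b := HahnSeries.ofPowerSeries ℤ Fq (↑u⁻¹) with hb
  have hab : a * b = 1 := by
    rw [ha, hb, ← map_mul, ← hu']; simp
  have ha0 : a ≠ 0 := left_ne_zero_of_mul_eq_one hab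
  have hb0 : b ≠ 0 := right_ne_zero_of_mul_eq_one hab
  have h1 := (OO_iff Fq ha0).mp (OO_ofPowerSeries Fq _)
  have h2 := (OO_iff Fq hb0).mp (OO_ofPowerSeries Fq _)
  have h3 := HahnSeries.order_mul ha0 hb0
  rw [hab, HahnSeries.order_one] at h3
  have hs : (HahnSeries.single m (1 : Fq) : Kt Fq) ≠ 0 := by simp
  rw [hE, HahnSeries.order_mul (pow_ne_zero _ hs) ha0, HahnSeries.order_pow,
    HahnSeries.order_single one_ne_zero, nsmul_eq_mul]
  omega

lemma OO_of_mulVec {d : ℕ} (V : Matrix (Fin d) (Fin d) (Kt Fq))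
    (hV : ∀ i j, OO Fq 0 (V i j))
    (h : (Matrix.of fun i j => (V i j).coeff 0).det ≠ 0) {k : ℤ} (z : Fin d → Kt Fq)
    (hz : ∀ i, OO Fq k (V.mulVec z i)) (i : Fin d) : OO Fq k (z i) := by
  have hu := Wps_det Fq 0 V h
  have hE := Wps_spec Fq 0 V hV
  have h1 : (HahnSeries.single 0 (1 : Fq) : Kt Fq) = 1 := rfl
  rw [h1, one_smul] at hE
  set B := (HahnSeries.ofPowerSeries ℤ Fq).mapMatrix (Wps Fq 0 V)⁻¹ with hB
  have hBV : B * V = 1 := by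
    rw [hB, hE, ← map_mul, ← hE, Matrix.nonsing_inv_mul _ hu, map_one]
  have hz' : z = B.mulVec (V.mulVec z) := by
    rw [Matrix.mulVec_mulVec, hBV, Matrix.one_mulVec]
  rw [hz', ← zero_add k]
  exact OO_mulVec Fq (fun i j => OO_ofPowerSeries Fq _) hz i

lemma coeff_mul_C' (f : Kt Fq) (c : Fq) (n : ℤ) :
    (f * HahnSeries.C c).coeff n = f.coeff n * c := by
  rw [mul_comm, HahnSeries.C_apply, HahnSeries.coeff_single_mul, sub_zero, mul_comm]

/-- function field analogue of Woods' conjecture.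
Every well rounded unimodular lattice has covering radius `q⁻¹` with respect to the sup norm. -/
theorem covRad_of_wellRounded {d : ℕ} (hd : 2 ≤ d)
    (g : Matrix (Fin d) (Fin d) (Kt Fq)) (hg : Kabs Fq g.det = 1)
    (hwr : IsWellRounded Fq (lattice Fq g)) :
    covRad Fq (vnorm Fq) (lattice Fq g) = (Fintype.card Fq : ℝ)⁻¹ := by
  have hd0 : 0 < d := by omega
  have hq := one_lt_card' Fq
  obtain ⟨v, hvL, hvI, hvn⟩ := hwr
  have hne : Nonempty (Fin d) := ⟨⟨0, hd0⟩⟩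
  let i0 : Fin d := ⟨0, hd0⟩
  obtain ⟨m, hm⟩ := vnorm_eq Fq (v i0) (hvI.ne_zero i0)
  rw [hvn] at hm
  have hmin : ∀ u ∈ lattice Fq g, (∀ i, OO Fq (m + 1) (u i)) → u = 0 := by
    intro u hu hO
    by_contra hu0
    have h1 : ell Fq (lattice Fq g) ≤ vnorm Fq u :=
      csInf_le ⟨0, by rintro r ⟨w, _, _, rfl⟩; exact vnorm_nonneg Fq w⟩ ⟨u, hu, hu0, rfl⟩
    have h2 := (vnorm_le_iff Fq hd0 (m + 1) u).mpr hO
    rw [hm] at h1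
    have h3 := (zpow_le_zpow_iff_right₀ hq).mp (h1.trans h2)
    omega
  choose C hC using hvL
  let V : Matrix (Fin d) (Fin d) (Kt Fq) := Matrix.of fun i j => v j i
  let Cm : Matrix (Fin d) (Fin d) (Polynomial Fq) := Matrix.of fun i j => C j i
  have hVC : V = g * (polyK Fq).mapMatrix Cm := by
    ext1 i j
    change v j i = _
    rw [hC j]
    rfl
  have hVL : ∀ c : Fin d → Polynomial Fq,
      V.mulVec (fun j => polyK Fq (c j)) ∈ lattice Fq g := by
    intro c
    refine ⟨Cm.mulVec c, ?_⟩
    rw [hVC, ← Matrix.mulVec_mulVec]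
    congr 1
    ext1 i
    simp [Matrix.mulVec, dotProduct]
  have hV : ∀ i j, OO Fq m (V i j) := fun i j =>
    (vnorm_le_iff Fq hd0 m (v j)).mp ((hvn j).trans hm).le i
  have hVinj : ∀ z, V.mulVec z = 0 → z = 0 := by
    intro z hz
    have := Fintype.linearIndependent_iff.mp hvI z (by
      rw [← hz]
      ext1 i
      simp [Matrix.mulVec, dotProduct, V, mul_comm])
    exact funext this
  have hVdet : V.det ≠ 0 := by
    intro h0
    obtain ⟨z, hz, hz0⟩ := Matrix.exists_mulVec_eq_zero_iff.mpr h0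
    exact hz (hVinj z hz0)
  have ha : (Matrix.of fun i j => (V i j).coeff m).det ≠ 0 := by
    intro h0
    obtain ⟨c, hc, hc0⟩ := Matrix.exists_mulVec_eq_zero_iff.mpr h0
    have hpc : ∀ j, polyK Fq (Polynomial.C (c j)) = HahnSeries.C (c j) := by
      intro j
      ext n
      rw [polyK_coeff, HahnSeries.C_apply, HahnSeries.coeff_single, Polynomial.coeff_C]
      split_ifs <;> first | rfl | omega
    have h1 := hmin _ (hVL fun j => Polynomial.C (c j)) (by
      intro i n hn
      simp only [hpc, Matrix.mulVec, dotProduct]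
      rw [HahnSeries.coeff_sum]
      simp only [coeff_mul_C']
      rcases (Int.lt_add_one_iff.mp hn).lt_or_eq with h | h
      · exact Finset.sum_eq_zero fun j _ => by rw [hV i j n h, zero_mul]
      · subst h
        have := congrFun hc0 i
        simp only [Matrix.mulVec, dotProduct, Matrix.of_apply, Pi.zero_apply] at this
        exact this)
    apply hc
    ext1 j
    have h2 := congrFun (hVinj _ h1) j
    simp only [hpc, Pi.zero_apply] at h2
    exact HahnSeries.C_injective (by rw [h2, Pi.zero_apply, map_zero])
  have hdec : ∀ w : Fin d → Kt Fq, ∃ c : Fin d → Polynomial Fq,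
      ∀ i, OO Fq (m + 1) ((w - V.mulVec fun j => polyK Fq (c j)) i) := by
    intro w
    choose c hc using fun j => exists_polyPart Fq (V⁻¹.mulVec w j)
    refine ⟨c, fun i => ?_⟩
    have : w - V.mulVec (fun j => polyK Fq (c j)) =
        V.mulVec (fun j => V⁻¹.mulVec w j - polyK Fq (c j)) := by
      have h1 : w = V.mulVec (V⁻¹.mulVec w) := by
        rw [Matrix.mulVec_mulVec, Matrix.mul_nonsing_inv _ (isUnit_iff_ne_zero.mpr hVdet),
          Matrix.one_mulVec]
      conv_lhs => rw [h1]
      rw [← Matrix.mulVec_sub]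
      rfl
    rw [this]
    exact OO_mulVec Fq hV hc i
  have hsub : ∀ u ∈ lattice Fq g, ∀ w ∈ lattice Fq g, u - w ∈ lattice Fq g := by
    rintro _ ⟨a, rfl⟩ _ ⟨b, rfl⟩
    refine ⟨a - b, ?_⟩
    rw [← Matrix.mulVec_sub]
    congr 1
    ext1 i
    simp
  have hLV : ∀ u ∈ lattice Fq g, ∃ c : Fin d → Polynomial Fq,
      u = V.mulVec fun j => polyK Fq (c j) := by
    intro u hu
    obtain ⟨c, hc⟩ := hdec u
    exact ⟨c, sub_eq_zero.mp (hmin _ (hsub _ hu _ (hVL c)) hc)⟩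
  have hm0 : m = 0 := by
    have hgd : g.det ≠ 0 := by
      intro h0
      simp [Kabs, h0] at hg
    have hgo : g.det.order = 0 := by
      rw [Kabs, if_neg hgd] at hg
      have := (zpow_eq_one_iff_right₀ (by positivity) hq.ne').mp hg
      omega
    have hcol : ∀ j, ∃ c : Fin d → Polynomial Fq,
        (fun i => g i j) = V.mulVec fun k => polyK Fq (c k) := by
      intro j
      refine hLV _ ⟨Pi.single j 1, ?_⟩
      ext1 i
      simp [Matrix.mulVec, dotProduct, Pi.single_apply, apply_ite (polyK Fq)]
    choose D hD using hcol
    have hgV : g = V * (polyK Fq).mapMatrix (Matrix.of fun i j => D j i) := by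
      ext1 i j
      exact congrFun (hD j) i
    have e1 := congrArg Matrix.det hVC
    have e2 := congrArg Matrix.det hgV
    rw [Matrix.det_mul, ← RingHom.map_det] at e1 e2
    have n1 := right_ne_zero_of_mul (e1 ▸ hVdet)
    have n2 := right_ne_zero_of_mul (e2 ▸ hgd)
    have o1 := polyK_order Fq _ n1
    have o2 := polyK_order Fq _ n2
    have r1 := congrArg HahnSeries.order e1
    have r2 := congrArg HahnSeries.order e2
    rw [HahnSeries.order_mul hgd n1] at r1
    rw [HahnSeries.order_mul hVdet n2] at r2
    have r3 := det_order Fq m V hV ha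
    have : (d : ℤ) * m = 0 := by omega
    rcases mul_eq_zero.mp this with h | h
    · omega
    · exact h
  subst hm0
  have hq1 : ((Fintype.card Fq : ℝ))⁻¹ = (Fintype.card Fq : ℝ) ^ (-(1 : ℤ)) := by
    rw [zpow_neg_one]
  have hLne : Nonempty (lattice Fq g) := ⟨⟨v i0, ⟨C i0, hC i0⟩⟩⟩
  have hup : ∀ w : Fin d → Kt Fq,
      ⨅ u : lattice Fq g, vnorm Fq (w - u.1) ≤ (Fintype.card Fq : ℝ)⁻¹ := by
    intro w
    obtain ⟨c, hc⟩ := hdec w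
    refine (ciInf_le ⟨0, by rintro r ⟨u, rfl⟩; exact vnorm_nonneg Fq _⟩
      (⟨_, hVL c⟩ : lattice Fq g)).trans ?_
    rw [hq1, vnorm_le_iff Fq hd0]
    simpa using hc
  unfold covRad
  apply le_antisymm
  · exact ciSup_le hup
  · refine le_ciSup_of_le ⟨_, by rintro r ⟨w, rfl⟩; exact hup w⟩
      (V.mulVec (fun _ => HahnSeries.single 1 1)) ?_
    refine le_ciInf ?_
    rintro ⟨u, hu⟩
    obtain ⟨c, rfl⟩ := hLV u hu
    by_contra hlt
    push Not at hlt
    simp only [← Matrix.mulVec_sub] at hlt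
    set z : Fin d → Kt Fq :=
      (fun _ => HahnSeries.single 1 1) - (fun j => polyK Fq (c j)) with hz
    have hz1 : (z i0).coeff 1 = 1 := by
      simp [hz, polyK_coeff]
    have hVz : V.mulVec z ≠ 0 := by
      intro h0
      rw [hVinj z h0] at hz1
      simp at hz1
    obtain ⟨k, hk⟩ := vnorm_eq Fq _ hVz
    rw [hk, hq1, zpow_lt_zpow_iff_right₀ hq] at hlt
    have hO := (vnorm_le_iff Fq hd0 k _).mp hk.le
    have := OO_of_mulVec Fq V hV ha z hO i0 1 (by omega)
    rw [hz1] at this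
    exact one_ne_zero this
end
end

section
/- Let d ≥ 2. For every unimodular lattice Λ ⊆ K̃^d there exists a = (a₁,…,a_d) ∈ ℤ^d with a₁ + … + a_d = 0 such that the lattice diag(x^{a₁},…,x^{a_d})·Λ is well rounded. -/
noncomputable section

open scoped Classical

variable (Fq : Type) [Field Fq] [Fintype Fq]

section helpers

set_option linter.unusedSectionVars false

lemma polyK_C (r : Fq) : polyK Fq (Polynomial.C r) = HahnSeries.C r := by
  simp [polyK, HahnSeries.algebraMap_apply']

lemma Kx_pow (k : ℕ) : Kx Fq ^ k = HahnSeries.single (-(k : ℤ)) 1 := by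
  simp [Kx, HahnSeries.single_pow]

lemma Kx_zpow (k : ℤ) : Kx Fq ^ k = HahnSeries.single (-k) 1 := by
  have h : Kx Fq = (HahnSeries.single (1:ℤ) (1:Fq))⁻¹ := by
    simp [Kx]
  rw [h, inv_zpow, ← zpow_neg]
  exact (RatFunc.single_zpow (F := Fq) (-k)).symm

lemma polyK_monomial (k : ℕ) (r : Fq) :
    polyK Fq (Polynomial.monomial k r) = HahnSeries.single (-(k : ℤ)) r := by
  rw [← Polynomial.C_mul_X_pow_eq_monomial, map_mul, polyK_C, map_pow]
  have : polyK Fq Polynomial.X = Kx Fq := by simp [polyK]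
  rw [this, Kx_pow, HahnSeries.C_apply, HahnSeries.single_mul_single]
  simp

lemma polyK_coeff_neg (p : Polynomial Fq) (m : ℕ) :
    (polyK Fq p).coeff (-(m : ℤ)) = p.coeff m := by
  induction p using Polynomial.induction_on' with
  | add p q hp hq => simp [map_add, hp, hq]
  | monomial k r =>
    rw [polyK_monomial, HahnSeries.coeff_single, Polynomial.coeff_monomial]
    simp [eq_comm]

lemma polyK_coeff_pos (p : Polynomial Fq) (n : ℤ) (hn : 0 < n) :
    (polyK Fq p).coeff n = 0 := by
  induction p using Polynomial.induction_on' with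
  | add p q hp hq => simp [map_add, hp, hq]
  | monomial k r =>
    rw [polyK_monomial, HahnSeries.coeff_single, if_neg (by omega)]

lemma polyK_eq_zero_of (p : Polynomial Fq) (h : ∀ n : ℤ, n ≤ 0 → (polyK Fq p).coeff n = 0) :
    p = 0 := by
  ext m
  rw [← polyK_coeff_neg, h _ (by omega)]; simp

lemma polyK_inj {p : Polynomial Fq} (h : polyK Fq p = 0) : p = 0 :=
  polyK_eq_zero_of Fq p (by simp [h])

/-- vanishing of coefficients of products -/
lemma mul_vanish (f h : Kt Fq) (m n : ℤ) (hf : ∀ k < m, f.coeff k = 0)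
    (hh : ∀ k < n, h.coeff k = 0) : ∀ k < m + n, (f * h).coeff k = 0 := by
  intro k hk
  rw [HahnSeries.coeff_mul]
  apply Finset.sum_eq_zero
  intro x hx
  rw [Finset.mem_antidiagonal] at hx
  by_cases h1 : x.1 < m
  · rw [hf _ h1, zero_mul]
  · rw [hh _ (by omega), mul_zero]

/-- uniform lower bound of the support of matrix entries -/
lemma matrix_bound {d : ℕ} (g : Matrix (Fin d) (Fin d) (Kt Fq)) :
    ∃ M : ℕ, ∀ i j, ∀ k : ℤ, k < -(M : ℤ) → (g i j).coeff k = 0 := by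
  refine ⟨∑ i, ∑ j, (g i j).order.natAbs, fun i j k hk => ?_⟩
  apply HahnSeries.coeff_eq_zero_of_lt_order
  have h1 : (g i j).order.natAbs ≤ ∑ j, (g i j).order.natAbs :=
    Finset.single_le_sum (f := fun j => (g i j).order.natAbs) (by simp) (Finset.mem_univ j)
  have h2 : ∑ j, (g i j).order.natAbs ≤ ∑ i, ∑ j, (g i j).order.natAbs :=
    Finset.single_le_sum (f := fun i => ∑ j, (g i j).order.natAbs) (by simp) (Finset.mem_univ i)
  omega

/-- the lattice vector with coordinates `c` -/
def latv {d : ℕ} (g : Matrix (Fin d) (Fin d) (Kt Fq)) (c : Fin d → Polynomial Fq) :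
    Fin d → Kt Fq := g.mulVec fun j => polyK Fq (c j)

/-- the box given by `a` meets the lattice trivially -/
def Adm {d : ℕ} (g : Matrix (Fin d) (Fin d) (Kt Fq)) (a : Fin d → ℤ) : Prop :=
  ∀ c, (∀ i, ∀ n ≤ a i, (latv Fq g c i).coeff n = 0) → c = 0

lemma mulVec_vanish {d : ℕ} (g : Matrix (Fin d) (Fin d) (Kt Fq)) (v : Fin d → Kt Fq) (m n : ℤ)
    (hg : ∀ i j, ∀ k < m, (g i j).coeff k = 0) (hv : ∀ j, ∀ k < n, (v j).coeff k = 0) :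
    ∀ i, ∀ k < m + n, (g.mulVec v i).coeff k = 0 := by
  intro i k hk
  rw [Matrix.mulVec, dotProduct, HahnSeries.coeff_sum]
  exact Finset.sum_eq_zero fun j _ => mul_vanish Fq _ _ m n (hg i j) (hv j) k hk

lemma exists_adm {d : ℕ} (g : Matrix (Fin d) (Fin d) (Kt Fq)) (hg : g.det ≠ 0) :
    ∃ a, Adm Fq g a := by
  obtain ⟨M, hM⟩ := matrix_bound Fq g⁻¹
  refine ⟨fun _ => M, fun c hc => ?_⟩
  have h1 : g⁻¹.mulVec (latv Fq g c) = fun j => polyK Fq (c j) := by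
    rw [latv, Matrix.mulVec_mulVec, Matrix.nonsing_inv_mul _ (isUnit_iff_ne_zero.2 hg),
      Matrix.one_mulVec]
  funext j
  apply polyK_eq_zero_of
  intro n hn
  have := mulVec_vanish Fq g⁻¹ (latv Fq g c) (-M) (M+1) hM
    (fun i k hk => hc i k (by show k ≤ (M : ℤ); omega)) j n (by omega)
  rw [h1] at this
  exact this

lemma polyK_smul (r : Fq) (p : Polynomial Fq) : polyK Fq (r • p) = HahnSeries.C r * polyK Fq p := by
  rw [Polynomial.smul_eq_C_mul, map_mul, polyK_C]

lemma latv_add {d : ℕ} (g : Matrix (Fin d) (Fin d) (Kt Fq)) (c c' : Fin d → Polynomial Fq) :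
    latv Fq g (c + c') = latv Fq g c + latv Fq g c' := by
  rw [latv, latv, latv, ← Matrix.mulVec_add]
  congr 1; funext j; simp

lemma latv_coeff_smul {d : ℕ} (g : Matrix (Fin d) (Fin d) (Kt Fq)) (r : Fq)
    (c : Fin d → Polynomial Fq) (i : Fin d) (n : ℤ) :
    (latv Fq g (r • c) i).coeff n = r * (latv Fq g c i).coeff n := by
  have : latv Fq g (r • c) i = HahnSeries.C r * latv Fq g c i := by
    simp only [latv, Matrix.mulVec, dotProduct, Pi.smul_apply, polyK_smul, Finset.mul_sum]
    refine Finset.sum_congr rfl fun j _ => by ring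
  rw [this, HahnSeries.C_apply, HahnSeries.coeff_single_mul, sub_zero]

lemma adm_bdd {d : ℕ} (g : Matrix (Fin d) (Fin d) (Kt Fq)) :
    ∃ B : ℤ, ∀ a, Adm Fq g a → B ≤ ∑ i, a i := by
  obtain ⟨M, hM⟩ := matrix_bound Fq g
  refine ⟨-(d * M), fun a ha => ?_⟩
  by_contra hlt
  push Not at hlt
  obtain ⟨N, hN⟩ : ∃ N : ℕ, ∀ i, 0 ≤ a i + M + N := by
    refine ⟨∑ i, (a i).natAbs, fun i => ?_⟩
    have : (a i).natAbs ≤ ∑ i, (a i).natAbs :=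
      Finset.single_le_sum (f := fun i => (a i).natAbs) (by simp) (Finset.mem_univ i)
    omega
  let L : (Fin d → Polynomial.degreeLT Fq N) →ₗ[Fq]
      ((i : Fin d) → Fin (a i + M + N).toNat → Fq) :=
    { toFun := fun c i m => (latv Fq g (fun j => (c j : Polynomial Fq)) i).coeff (a i - (m : ℕ))
      map_add' := by
        intro c c'
        funext i m
        have := latv_add Fq g (fun j => (c j : Polynomial Fq)) (fun j => (c' j : Polynomial Fq))
        have h2 := congrArg (fun v => (v i).coeff (a i - (m : ℕ))) this
        exact h2
      map_smul' := by
        intro r c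
        funext i m
        exact latv_coeff_smul Fq g r (fun j => (c j : Polynomial Fq)) i _ }
  have : FiniteDimensional Fq (Polynomial.degreeLT Fq N) :=
    Module.Finite.equiv (Polynomial.degreeLTEquiv Fq N).symm
  have hfin : Module.finrank Fq ((i : Fin d) → Fin (a i + M + N).toNat → Fq)
      < Module.finrank Fq (Fin d → Polynomial.degreeLT Fq N) := by
    rw [Module.finrank_pi_fintype, Module.finrank_pi_fintype]
    simp only [(Polynomial.degreeLTEquiv Fq N).finrank_eq, Module.finrank_fin_fun]
    zify
    have : ∀ i, ((a i + M + N).toNat : ℤ) = a i + M + N := fun i => Int.toNat_of_nonneg (hN i)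
    simp only [this, Finset.sum_add_distrib]
    simp
    linarith
  have hker := LinearMap.ker_ne_bot_of_finrank_lt (f := L) hfin
  obtain ⟨c, hc, hc0⟩ := Submodule.exists_mem_ne_zero_of_ne_bot hker
  apply hc0
  have := ha (fun j => (c j : Polynomial Fq)) ?_
  · funext j
    have h := congrFun this j
    exact Subtype.ext h
  · intro i n hn
    by_cases hlow : n < -(M:ℤ) + (-(N:ℤ) + 1)
    · refine mulVec_vanish Fq g _ _ _ hM ?_ i n hlow
      intro j k hk
      obtain ⟨m, rfl⟩ : ∃ m : ℕ, k = -(m : ℤ) := ⟨(-k).toNat, by omega⟩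
      rw [polyK_coeff_neg]
      apply Polynomial.coeff_eq_zero_of_degree_lt
      refine (Polynomial.mem_degreeLT.1 (c j).2).trans_le ?_
      exact_mod_cast (by omega : N ≤ m)
    · have h0 : L c = 0 := hc
      have := congrFun (congrFun h0 i) ⟨(a i - n).toNat, by omega⟩
      have e : a i - ((a i - n).toNat : ℤ) = n := by omega
      rw [← e]; exact this


lemma exists_poly_part (y : Kt Fq) :
    ∃ p : Polynomial Fq, ∀ n : ℤ, n ≤ 0 → (y - polyK Fq p).coeff n = 0 := by
  refine ⟨∑ m ∈ Finset.range (y.order.natAbs + 1), Polynomial.monomial m (y.coeff (-(m:ℤ))), ?_⟩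
  intro n hn
  obtain ⟨k, rfl⟩ : ∃ k : ℕ, n = -(k : ℤ) := ⟨(-n).toNat, by omega⟩
  rw [HahnSeries.coeff_sub, polyK_coeff_neg, Polynomial.finsetSum_coeff]
  simp only [Polynomial.coeff_monomial, Finset.sum_ite_eq', Finset.mem_range]
  split_ifs with h
  · simp
  · rw [HahnSeries.coeff_eq_zero_of_lt_order (by omega)]; simp

lemma exists_powerSeries (f : Kt Fq) (hf : ∀ n < 0, f.coeff n = 0) :
    HahnSeries.ofPowerSeries ℤ Fq (PowerSeries.mk fun n => f.coeff n) = f := by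
  ext n
  rcases lt_or_ge n 0 with h | h
  · rw [hf n h]
    rw [HahnSeries.ofPowerSeries_apply]
    apply HahnSeries.embDomain_of_notMem_range
    rintro ⟨m, hm⟩
    simp at hm
    omega
  · obtain ⟨k, rfl⟩ := Int.eq_ofNat_of_zero_le h
    rw [HahnSeries.ofPowerSeries_apply_coeff, PowerSeries.coeff_mk]

lemma card_gt : (1 : ℝ) < Fintype.card Fq := by
  exact_mod_cast Fintype.one_lt_card

lemma Kabs_ge (f : Kt Fq) (n : ℤ) (hn : n ≤ 0) (h : f.coeff n ≠ 0) : 1 ≤ Kabs Fq f := by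
  have h0 : f ≠ 0 := by rintro rfl; simp at h
  rw [Kabs, if_neg h0]
  have := HahnSeries.order_le_of_coeff_ne_zero h
  exact one_le_zpow₀ (card_gt Fq).le (by omega)

lemma Kabs_le (f : Kt Fq) (hf : ∀ n < 0, f.coeff n = 0) : Kabs Fq f ≤ 1 := by
  rw [Kabs]
  split_ifs with h0
  · norm_num
  have : 0 ≤ f.order := by
    by_contra h
    push Not at h
    exact HahnSeries.coeff_order_eq_zero.not.2 h0 (hf _ h)
  exact zpow_le_one_of_nonpos₀ (card_gt Fq).le (by omega)

lemma Kabs_le_vnorm {d : ℕ} (v : Fin d → Kt Fq) (i : Fin d) : Kabs Fq (v i) ≤ vnorm Fq v :=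
  le_ciSup (f := fun i => Kabs Fq (v i)) (Set.finite_range _).bddAbove i

/-- invertibility of the matrix of minimal vectors -/
lemma det_order_zero {d : ℕ} (W : Matrix (Fin d) (Fin d) (Kt Fq))
    (h0 : ∀ i j, ∀ n < 0, (W i j).coeff n = 0) (h1 : ∀ i j, i ≠ j → (W i j).coeff 0 = 0)
    (h2 : ∀ i, (W i i).coeff 0 ≠ 0) : W.det ≠ 0 ∧ W.det.order = 0 := by
  let W' : Matrix (Fin d) (Fin d) (PowerSeries Fq) := fun i j => PowerSeries.mk fun n => (W i j).coeff n
  have hW : (HahnSeries.ofPowerSeries ℤ Fq).mapMatrix W' = W := by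
    ext1 i j
    exact exists_powerSeries Fq _ (h0 i j)
  have hdet : PowerSeries.constantCoeff W'.det ≠ 0 := by
    rw [RingHom.map_det]
    have : (PowerSeries.constantCoeff (R := Fq)).mapMatrix W'
        = Matrix.diagonal fun i => (W i i).coeff 0 := by
      ext i j
      have e : (PowerSeries.constantCoeff (R := Fq)).mapMatrix W' i j = (W i j).coeff 0 := by
        change PowerSeries.constantCoeff (W' i j) = _
        rw [← PowerSeries.coeff_zero_eq_constantCoeff_apply, PowerSeries.coeff_mk, Nat.cast_zero]
      rw [e]
      by_cases hij : i = j
      · subst hij; simp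
      · rw [Matrix.diagonal_apply_ne _ hij, h1 i j hij]
    rw [this, Matrix.det_diagonal]
    exact Finset.prod_ne_zero_iff.2 fun i _ => h2 i
  have hu : IsUnit W'.det := PowerSeries.isUnit_iff_constantCoeff.2 (isUnit_iff_ne_zero.2 hdet)
  have hc : W.det.coeff 0 ≠ 0 := by
    rw [← hW, ← RingHom.map_det]
    have := HahnSeries.ofPowerSeries_apply_coeff (Γ := ℤ) W'.det 0
    rw [Nat.cast_zero] at this
    rw [this, PowerSeries.coeff_zero_eq_constantCoeff_apply]
    exact hdet
  have hne : W.det ≠ 0 := by intro h; simp [h] at hc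
  refine ⟨hne, le_antisymm (HahnSeries.order_le_of_coeff_ne_zero hc) ?_⟩
  by_contra h
  push Not at h
  apply HahnSeries.coeff_order_eq_zero.not.2 hne
  rw [← hW, ← RingHom.map_det] at h ⊢
  have hs : ∀ n < 0, (HahnSeries.ofPowerSeries ℤ Fq W'.det).coeff n = 0 := by
    intro n hn
    rw [HahnSeries.ofPowerSeries_apply]
    apply HahnSeries.embDomain_of_notMem_range
    rintro ⟨m, hm⟩
    simp at hm
    omega
  exact hs _ h

lemma polyK_unit_order (p : Polynomial Fq) (hp : IsUnit p) : (polyK Fq p).order = 0 := by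
  obtain ⟨r, hr, rfl⟩ := Polynomial.isUnit_iff.1 hp
  rw [polyK_C, HahnSeries.C_apply, HahnSeries.order_single hr.ne_zero]

lemma scale_coeff (k : ℤ) (f : Kt Fq) (n : ℤ) :
    (Kx Fq ^ k * f).coeff n = f.coeff (n + k) := by
  rw [Kx_zpow, HahnSeries.coeff_single_mul]; simp

lemma adm_scaled {d : ℕ} {g : Matrix (Fin d) (Fin d) (Kt Fq)} {a : Fin d → ℤ} (ha : Adm Fq g a)
    (c : Fin d → Polynomial Fq)
    (h : ∀ i, ∀ n ≤ 0, (Kx Fq ^ a i * latv Fq g c i).coeff n = 0) : c = 0 := by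
  apply ha c
  intro i n hn
  have := h i (n - a i) (by omega)
  rwa [scale_coeff, sub_add_cancel] at this

lemma Kx_ne : Kx Fq ≠ 0 := by simp [Kx]

end helpers

/-- For every unimodular lattice `Λ ⊆ K̃^d` there is an integer vector
`a ∈ ℤ^d` with `a₁ + … + a_d = 0` such that `diag(x^{a₁},…,x^{a_d})·Λ` is well rounded. -/
theorem integer_diagonal_wellRounded {d : ℕ} (hd : 2 ≤ d)
    (g : Matrix (Fin d) (Fin d) (Kt Fq)) (hg : Kabs Fq g.det = 1) :
    ∃ a : Fin d → ℤ, ∑ i, a i = 0 ∧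
      IsWellRounded Fq ((fun v i => Kx Fq ^ a i * v i) '' lattice Fq g) := by
  have hdet : g.det ≠ 0 := by
    intro h; simp [h, Kabs] at hg
  have hord : g.det.order = 0 := by
    rw [Kabs, if_neg hdet, zpow_eq_one_iff_right₀ (by positivity) (card_gt Fq).ne'] at hg
    omega
  -- a minimal admissible box
  obtain ⟨a, ha, hmin⟩ : ∃ a, Adm Fq g a ∧ ∀ a', Adm Fq g a' → ∑ i, a i ≤ ∑ i, a' i := by
    obtain ⟨B, hB⟩ := adm_bdd Fq g
    obtain ⟨a0, ha0⟩ := exists_adm Fq g hdet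
    obtain ⟨s, ⟨a, ha, rfl⟩, h⟩ := Int.exists_least_of_bdd
      (P := fun s => ∃ a, Adm Fq g a ∧ ∑ i, a i = s)
      ⟨B, by rintro z ⟨a, ha, rfl⟩; exact hB a ha⟩ ⟨_, a0, ha0, rfl⟩
    exact ⟨a, ha, fun a' ha' => h _ ⟨a', ha', rfl⟩⟩
  have hvec : ∀ j, ∃ c : Fin d → Polynomial Fq,
      (∀ i, ∀ n < 0, (Kx Fq ^ a i * latv Fq g c i).coeff n = 0) ∧
      (∀ i, i ≠ j → (Kx Fq ^ a i * latv Fq g c i).coeff 0 = 0) ∧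
      (Kx Fq ^ a j * latv Fq g c j).coeff 0 ≠ 0 := by
    intro j
    have hnot : ¬ Adm Fq g (fun i => a i - if i = j then 1 else 0) := by
      intro h
      have := hmin _ h
      simp at this
    unfold Adm at hnot
    push Not at hnot
    obtain ⟨c, hc, hc0⟩ := hnot
    have e1 : ∀ i, ∀ n < 0, (Kx Fq ^ a i * latv Fq g c i).coeff n = 0 := by
      intro i n hn
      rw [scale_coeff]
      apply hc
      split_ifs <;> omega
    have e2 : ∀ i, i ≠ j → (Kx Fq ^ a i * latv Fq g c i).coeff 0 = 0 := by
      intro i hi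
      rw [scale_coeff]
      apply hc
      rw [if_neg hi]; omega
    refine ⟨c, e1, e2, fun h0 => hc0 (adm_scaled Fq ha c fun i n hn => ?_)⟩
    rcases hn.lt_or_eq with h | rfl
    · exact e1 i n h
    · by_cases hij : i = j
      · subst hij; exact h0
      · exact e2 i hij
  choose c hc1 hc2 hc3 using hvec
  let D : Matrix (Fin d) (Fin d) (Kt Fq) := Matrix.diagonal fun i => Kx Fq ^ a i
  let C : Matrix (Fin d) (Fin d) (Polynomial Fq) := fun i j => c j i
  let W : Matrix (Fin d) (Fin d) (Kt Fq) := fun i j => Kx Fq ^ a i * latv Fq g (c j) i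
  have hDv : ∀ (v : Fin d → Kt Fq) i, D.mulVec v i = Kx Fq ^ a i * v i := fun v i =>
    Matrix.mulVec_diagonal _ _ _
  have hW : W = D * g * (polyK Fq).mapMatrix C := by
    ext1 i j
    rw [Matrix.mul_assoc, Matrix.diagonal_mul]
    rfl
  obtain ⟨hWne, hWord⟩ := det_order_zero Fq W (fun i j => hc1 j i)
    (fun i j hij => hc2 j i hij) (fun i => hc3 i)
  have hWu : IsUnit W.det := isUnit_iff_ne_zero.2 hWne
  have hDne : D.det ≠ 0 := by
    rw [Matrix.det_diagonal]
    exact Finset.prod_ne_zero_iff.2 fun i _ => zpow_ne_zero _ (Kx_ne Fq)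
  -- every lattice vector is a polynomial combination of the minimal vectors
  have hgen : ∀ b : Fin d → Polynomial Fq, ∃ p : Fin d → Polynomial Fq, b = C.mulVec p := by
    intro b
    choose p hp using fun i => exists_poly_part Fq (W⁻¹.mulVec (D.mulVec (latv Fq g b)) i)
    refine ⟨p, sub_eq_zero.1 (adm_scaled Fq ha (b - C.mulVec p) ?_)⟩
    have key : D.mulVec (latv Fq g (b - C.mulVec p))
        = W.mulVec (fun i => W⁻¹.mulVec (D.mulVec (latv Fq g b)) i - polyK Fq (p i)) := by
      have s1 : (fun i => W⁻¹.mulVec (D.mulVec (latv Fq g b)) i - polyK Fq (p i))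
          = W⁻¹.mulVec (D.mulVec (latv Fq g b)) - fun i => polyK Fq (p i) := rfl
      have s2 : (fun j => polyK Fq ((b - C.mulVec p) j)) = (fun j => polyK Fq (b j))
          - ((polyK Fq).mapMatrix C).mulVec fun j => polyK Fq (p j) := by
        funext j
        simp [Matrix.mulVec, dotProduct, map_sum]
      rw [s1, Matrix.mulVec_sub, Matrix.mulVec_mulVec _ W, Matrix.mul_nonsing_inv _ hWu,
        Matrix.one_mulVec, latv, latv, s2, Matrix.mulVec_sub, Matrix.mulVec_sub, hW]
      simp only [Matrix.mulVec_mulVec, Matrix.mul_assoc]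
    intro i n hn
    rw [← hDv, key]
    exact mulVec_vanish Fq W _ 0 1 (fun i j => hc1 j i) (fun j k hk => hp j k (by omega)) i n
      (by omega)
  have hCu : IsUnit C.det := by
    choose p hp using fun j => hgen (Pi.single j 1)
    have : C * Matrix.of (fun i j => p j i) = 1 := by
      ext1 i j
      have := congrFun (hp j) i
      rw [Matrix.one_apply]
      rw [Pi.single_apply] at this
      exact this.symm
    have h2 := congrArg Matrix.det this
    rw [Matrix.det_mul, Matrix.det_one] at h2
    exact IsUnit.of_mul_eq_one _ h2
  have hsum : ∑ i, a i = 0 := by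
    have hCne : polyK Fq C.det ≠ 0 := fun h => hCu.ne_zero (polyK_inj Fq h)
    have hDo : D.det.order = -∑ i, a i := by
      have : D.det = HahnSeries.single (-∑ i, a i) (1 : Fq) := by
        rw [Matrix.det_diagonal, ← Kx_zpow]
        generalize (Finset.univ : Finset (Fin d)) = s
        induction s using Finset.induction_on with
        | empty => simp
        | insert x s hx ih =>
          rw [Finset.prod_insert hx, Finset.sum_insert hx, ih, zpow_add₀ (Kx_ne Fq)]
      rw [this, HahnSeries.order_single one_ne_zero]
    rw [hW, Matrix.det_mul, Matrix.det_mul, ← RingHom.map_det,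
      HahnSeries.order_mul (mul_ne_zero hDne hdet) hCne, HahnSeries.order_mul hDne hdet,
      polyK_unit_order Fq _ hCu, hord, hDo] at hWord
    omega
  refine ⟨a, hsum, ?_⟩
  have : Nonempty (Fin d) := ⟨⟨0, by omega⟩⟩
  have hmem : ∀ j, W.transpose j ∈ (fun (v : Fin d → Kt Fq) i => Kx Fq ^ a i * v i) '' lattice Fq g :=
    fun j => ⟨latv Fq g (c j), ⟨c j, rfl⟩, rfl⟩
  have hnorm : ∀ j, vnorm Fq (W.transpose j) = 1 := by
    intro j
    apply le_antisymm
    · exact ciSup_le fun i => Kabs_le Fq _ (hc1 j i)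
    · exact (Kabs_ge Fq _ 0 le_rfl (hc3 j)).trans (Kabs_le_vnorm Fq (W.transpose j) j)
  have hlin : LinearIndependent (Kt Fq) W.transpose :=
    Matrix.linearIndependent_rows_of_det_ne_zero (by rwa [Matrix.det_transpose])
  have hell : ell Fq ((fun (v : Fin d → Kt Fq) i => Kx Fq ^ a i * v i) '' lattice Fq g) = 1 := by
    apply IsLeast.csInf_eq
    refine ⟨⟨W.transpose ⟨0, by omega⟩, hmem _, hlin.ne_zero _, hnorm _⟩, ?_⟩
    rintro r ⟨_, ⟨_, ⟨b, rfl⟩, rfl⟩, hv0, rfl⟩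
    by_contra hlt
    apply hv0
    have hb : b = 0 := by
      apply adm_scaled Fq ha
      intro i n hn
      by_contra hne
      exact hlt ((Kabs_ge Fq _ n hn hne).trans
        (Kabs_le_vnorm Fq (fun i => Kx Fq ^ a i * latv Fq g b i) i))
    subst hb
    funext i
    simp [Matrix.mulVec, dotProduct]
  exact ⟨W.transpose, hmem, hlin, fun j => by rw [hnorm, hell]⟩
end
end
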